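/- arXiv:2405.13458 — 2 statements merged into one kernel-verified Lean document; each statement's English description precedes it below -/
import Mathlib

section
/- Let λ ≥ 2 and n ≥ 1 be integers, N ≤ λ^n, and for each 1 ≤ l ≤ N suppose there exist r_l ∈ ℕ and trigonometric polynomials p_l and g_l^{(r)} (1 ≤ r ≤ r_l) satisfying 1 − |p_l(ξ)|² = λ^n · Σ_{r=1}^{r_l} |g_l^{(r)}(ξ)|² for all ξ ∈ ℝⁿ. If N < λ^n, let p_l for l = N+1, …, λ^n be trigonometric polynomials with |p_l(ξ)|² = 1 for all ξ. Let ν_1, …, ν_{λ^n} be an enumeration of Λ and define τ(ξ) = λ^{−n} Σ_{l=1}^{λ^n} p_l(λξ) e^{i ν_l·ξ}. Then for all ξ ∈ ℝⁿ, 1 − Σ_{γ∈Γ} |τ(ξ + γ)|² = Σ_{l=1}^{N} Σ_{r=1}^{r_l} |g_l^{(r)}(λξ)|². -/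
open MeasureTheory Finset Filter Topology

noncomputable section

/-- `f` is a trigonometric polynomial on ℝⁿ: a finite sum ξ ↦ Σ_{k∈F} h(k) e^{−i k·ξ}. -/
def IsTrigPoly (n : ℕ) (f : (Fin n → ℝ) → ℂ) : Prop :=
  ∃ (F : Finset (Fin n → ℤ)) (h : (Fin n → ℤ) → ℂ),
    ∀ ξ : Fin n → ℝ,
      f ξ = ∑ k ∈ F, h k * Complex.exp (-Complex.I * ∑ i, (k i : ℂ) * (ξ i : ℂ))

/-- Λ = {0,…,λ−1}ⁿ as a finite subset of ℤⁿ. -/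
def Lambda (lam n : ℕ) : Finset (Fin n → ℤ) :=
  Fintype.piFinset fun _ => Finset.Ico (0 : ℤ) (lam : ℤ)

/-- The translate ξ + (2π/λ)·ρ, i.e. ξ + γ for γ = (2π/λ)ρ ∈ Γ. -/
def gshift (lam n : ℕ) (ξ : Fin n → ℝ) (ρ : Fin n → ℤ) : Fin n → ℝ :=
  fun i => ξ i + (2 * Real.pi / lam) * (ρ i : ℝ)

/-- e^{i ν·ξ}. -/
def eI (n : ℕ) (ν : Fin n → ℤ) (ξ : Fin n → ℝ) : ℂ :=
  Complex.exp (Complex.I * ∑ i, (ν i : ℂ) * (ξ i : ℂ))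

/-- The dilate λ·ξ. -/
def dil (lam n : ℕ) (ξ : Fin n → ℝ) : Fin n → ℝ := fun i => (lam : ℝ) * ξ i

/-!
The characters `ξ ↦ e^{iν_l·ξ}`, whose frequencies represent distinct classes of `ℤⁿ/λℤⁿ`, are
orthogonal when restricted to the coset `ξ + Γ`, while the polyphase components `ξ ↦ p_l(λξ)` are
constant on it. Parseval's identity therefore gives `Σ_γ |τ(ξ + γ)|² = λ^{-n} Σ_l |p_l(λξ)|²`.
Writing `1` as the average of the `λⁿ` ones, `1 - Σ_γ |τ(ξ + γ)|²` becomes the average of the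
defects `1 - |p_l(λξ)|²`, which are either `λⁿ Σ_r |g_l^{(r)}(λξ)|²` or `0`.
-/

open scoped ComplexConjugate

lemma sum_norm_sq_sum_mul_of_orthogonal {𝕜 α ι : Type*} [RCLike 𝕜] [Fintype ι] [DecidableEq ι]
    {s : Finset α} {χ : ι → α → 𝕜} {C : ℝ}
    (hχ : ∀ l m, ∑ x ∈ s, χ l x * conj (χ m x) = if l = m then (C : 𝕜) else 0) (a : ι → 𝕜) :
    ∑ x ∈ s, ‖∑ l, a l * χ l x‖ ^ 2 = C * ∑ l, ‖a l‖ ^ 2 := by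
  apply RCLike.ofReal_injective (K := 𝕜)
  push_cast
  calc ∑ x ∈ s, ((‖∑ l, a l * χ l x‖ : ℝ) : 𝕜) ^ 2
      = ∑ x ∈ s, ∑ l, ∑ m, a l * conj (a m) * (χ l x * conj (χ m x)) := by
        simp only [← RCLike.mul_conj, map_sum, map_mul, sum_mul_sum, mul_mul_mul_comm]
    _ = ∑ l, ∑ m, a l * conj (a m) * ∑ x ∈ s, χ l x * conj (χ m x) := by
        simp only [mul_sum]
        rw [sum_comm]
        exact sum_congr rfl fun l _ ↦ sum_comm
    _ = (C : 𝕜) * ∑ l, ((‖a l‖ : ℝ) : 𝕜) ^ 2 := by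
        simp only [hχ, mul_ite, mul_zero, sum_ite_eq, mem_univ, if_true, RCLike.mul_conj,
          ← sum_mul, mul_comm (C : 𝕜)]

lemma sum_Ico_zpow_mul_of_isPrimitiveRoot {K : Type*} [Field K] {ζ : K} {m : ℕ}
    (hζ : IsPrimitiveRoot ζ m) (a : ℤ) :
    ∑ k ∈ Ico (0 : ℤ) m, ζ ^ (a * k) = if (m : ℤ) ∣ a then (m : K) else 0 := by
  have sum_eq_geom_sum : ∑ k ∈ Ico (0 : ℤ) m, ζ ^ (a * k) = ∑ k ∈ range m, (ζ ^ a) ^ k := by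
    simp [Int.Ico_eq_finset_map, zpow_mul]
  have pow_eq_one : (ζ ^ a) ^ m = 1 := by
    rw [← zpow_natCast, zpow_comm, zpow_natCast, hζ.pow_eq_one, one_zpow]
  rw [sum_eq_geom_sum]
  split_ifs with hdvd
  · simp [(hζ.zpow_eq_one_iff_dvd a).2 hdvd]
  · rw [geom_sum_eq (mt (hζ.zpow_eq_one_iff_dvd a).1 hdvd), pow_eq_one, sub_self, zero_div]

lemma injOn_intCast_zmod_Lambda (lam n : ℕ) :
    Set.InjOn (fun (a : Fin n → ℤ) i ↦ (a i : ZMod lam)) (Lambda lam n) := by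
  intro a ha b hb hab
  simp only [Lambda, mem_coe, Fintype.mem_piFinset, mem_Ico] at ha hb
  funext i
  have hmod : a i % lam = b i % lam := (ZMod.intCast_eq_intCast_iff' _ _ _).1 (congrFun hab i)
  rwa [Int.emod_eq_of_lt (ha i).1 (ha i).2, Int.emod_eq_of_lt (hb i).1 (hb i).2] at hmod

section Characters

variable {n : ℕ} (a b : Fin n → ℤ) (ξ : Fin n → ℝ)

lemma eI_zero : eI n 0 ξ = 1 := by
  simp [eI]

lemma eI_mul_conj_eI : eI n a ξ * conj (eI n b ξ) = eI n (a - b) ξ := by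
  simp only [eI, ← Complex.exp_conj, ← Complex.exp_add, map_mul, map_sum, Complex.conj_I,
    Complex.conj_ofReal, map_intCast, Pi.sub_apply, Int.cast_sub, sub_mul, sum_sub_distrib]
  ring_nf

lemma eI_periodic (k : Fin n → ℤ) : Function.Periodic (eI n a) fun i ↦ 2 * Real.pi * k i := by
  intro ξ
  refine Complex.exp_eq_exp_iff_exists_int.2 ⟨∑ i, a i * k i, ?_⟩
  simp only [Pi.add_apply, Int.cast_sum, mul_sum, sum_mul, ← sum_add_distrib]
  refine sum_congr rfl fun i _ ↦ ?_
  push_cast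
  ring

lemma eI_gshift (lam : ℕ) (ρ : Fin n → ℤ) :
    eI n a (gshift lam n ξ ρ)
      = eI n a ξ * ∏ i, Complex.exp (2 * Real.pi * Complex.I / lam) ^ (a i * ρ i) := by
  simp only [eI, gshift, ← Complex.exp_int_mul, ← Complex.exp_sum, ← Complex.exp_add, mul_sum,
    ← sum_add_distrib]
  refine congrArg Complex.exp (sum_congr rfl fun i _ ↦ ?_)
  push_cast
  ring

variable (lam : ℕ) [NeZero lam]

lemma sum_eI_gshift :
    ∑ ρ ∈ Lambda lam n, eI n a (gshift lam n ξ ρ)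
      = if ∀ i, (lam : ℤ) ∣ a i then (lam : ℂ) ^ n * eI n a ξ else 0 := by
  have hζ := Complex.isPrimitiveRoot_exp lam (NeZero.ne lam)
  simp only [eI_gshift, ← mul_sum, Lambda]
  rw [sum_prod_piFinset _ fun i k ↦ Complex.exp (2 * Real.pi * Complex.I / lam) ^ (a i * k)]
  simp only [sum_Ico_zpow_mul_of_isPrimitiveRoot hζ, Fintype.prod_ite_zero, prod_const, card_univ,
    Fintype.card_fin, ite_mul, zero_mul, mul_comm (eI n a ξ)]

lemma sum_eI_mul_conj_eI_gshift {ι : Type*} [DecidableEq ι] {ν : ι → Fin n → ℤ}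
    (hν : Function.Injective fun l i ↦ (ν l i : ZMod lam)) (l m : ι) :
    ∑ ρ ∈ Lambda lam n, eI n (ν l) (gshift lam n ξ ρ) * conj (eI n (ν m) (gshift lam n ξ ρ))
      = if l = m then (lam : ℂ) ^ n else 0 := by
  have hdvd : (∀ i, (lam : ℤ) ∣ (ν l - ν m) i) ↔ l = m := by
    simp only [← hν.eq_iff, funext_iff, Pi.sub_apply, ← ZMod.intCast_zmod_eq_zero_iff_dvd,
      Int.cast_sub, sub_eq_zero]
  simp only [eI_mul_conj_eI, sum_eI_gshift, hdvd]
  split_ifs with hlm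
  · rw [hlm, sub_self, eI_zero, mul_one]
  · rfl

end Characters

lemma IsTrigPoly.periodic {n : ℕ} {f : (Fin n → ℝ) → ℂ} (hf : IsTrigPoly n f)
    (k : Fin n → ℤ) : Function.Periodic f fun i ↦ 2 * Real.pi * k i := by
  obtain ⟨F, h, hf⟩ := hf
  have f_eq : f = fun ξ ↦ ∑ m ∈ F, h m * eI n (-m) ξ := by
    funext ξ
    simp [hf, eI]
  intro ξ
  simp only [f_eq, eI_periodic _ k ξ]

lemma dil_gshift {lam n : ℕ} [NeZero lam] (ξ : Fin n → ℝ) (ρ : Fin n → ℤ) :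
    dil lam n (gshift lam n ξ ρ) = dil lam n ξ + fun i ↦ 2 * Real.pi * ρ i := by
  funext i
  have hlam : (lam : ℝ) ≠ 0 := NeZero.ne _
  simp only [dil, gshift, Pi.add_apply]
  field_simp

/-- The mask `τ(ξ) = λ⁻ⁿ Σ_l p_l(λξ) e^{iν_l·ξ}` with polyphase components `p_l` and frequency
shifts `ν_l`. The index type is arbitrary, so that `ν` may enumerate any system of representatives
of `ℤⁿ/λℤⁿ`. -/
def polyphaseMask {ι : Type*} [Fintype ι] (lam : ℕ) {n : ℕ} (p : ι → (Fin n → ℝ) → ℂ)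
    (ν : ι → Fin n → ℤ) (ξ : Fin n → ℝ) : ℂ :=
  ((lam : ℂ) ^ n)⁻¹ * ∑ l, p l (dil lam n ξ) * eI n (ν l) ξ

section Mask

variable {ι : Type*} [Fintype ι] {lam n : ℕ} [NeZero lam] {p : ι → (Fin n → ℝ) → ℂ}
  {ν : ι → Fin n → ℤ}

theorem sum_norm_sq_polyphaseMask_gshift
    (hp : ∀ l (k : Fin n → ℤ), Function.Periodic (p l) fun i ↦ 2 * Real.pi * k i)
    (hν : Function.Injective fun l i ↦ (ν l i : ZMod lam)) (ξ : Fin n → ℝ) :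
    ∑ ρ ∈ Lambda lam n, ‖polyphaseMask lam p ν (gshift lam n ξ ρ)‖ ^ 2
      = ((lam : ℝ) ^ n)⁻¹ * ∑ l, ‖p l (dil lam n ξ)‖ ^ 2 := by
  classical
  have parseval := sum_norm_sq_sum_mul_of_orthogonal (C := (lam : ℝ) ^ n)
    (by simpa using sum_eI_mul_conj_eI_gshift ξ lam hν) fun l ↦ p l (dil lam n ξ)
  have hlam : (lam : ℝ) ^ n ≠ 0 := pow_ne_zero n (NeZero.ne _)
  simp only [polyphaseMask, dil_gshift, hp _ _ (dil lam n ξ), norm_mul, mul_pow, ← mul_sum,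
    parseval, norm_inv, norm_pow, Complex.norm_natCast]
  field_simp

theorem subQMF_identity_general {κ : ι → Type*} [∀ l, Fintype (κ l)]
    {g : (l : ι) → κ l → (Fin n → ℝ) → ℂ} {S : Finset ι}
    (hp : ∀ l (k : Fin n → ℤ), Function.Periodic (p l) fun i ↦ 2 * Real.pi * k i)
    (hpg : ∀ l ∈ S, ∀ ξ, 1 - ‖p l ξ‖ ^ 2 = (lam : ℝ) ^ n * ∑ r, ‖g l r ξ‖ ^ 2)
    (hp1 : ∀ l ∉ S, ∀ ξ, ‖p l ξ‖ ^ 2 = 1) (hcard : Fintype.card ι = lam ^ n)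
    (hν : Function.Injective fun l i ↦ (ν l i : ZMod lam)) (ξ : Fin n → ℝ) :
    1 - ∑ ρ ∈ Lambda lam n, ‖polyphaseMask lam p ν (gshift lam n ξ ρ)‖ ^ 2
      = ∑ l ∈ S, ∑ r, ‖g l r (dil lam n ξ)‖ ^ 2 := by
  have hlam : (lam : ℝ) ^ n ≠ 0 := pow_ne_zero n (NeZero.ne _)
  calc 1 - ∑ ρ ∈ Lambda lam n, ‖polyphaseMask lam p ν (gshift lam n ξ ρ)‖ ^ 2
      = ((lam : ℝ) ^ n)⁻¹ * ∑ l, (1 - ‖p l (dil lam n ξ)‖ ^ 2) := by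
        rw [sum_norm_sq_polyphaseMask_gshift hp hν, sum_sub_distrib, mul_sub]
        simp [hcard, hlam]
    _ = ((lam : ℝ) ^ n)⁻¹ * ∑ l ∈ S, (1 - ‖p l (dil lam n ξ)‖ ^ 2) := by
        rw [← sum_subset (subset_univ S) fun l _ hl ↦ by rw [hp1 l hl, sub_self]]
    _ = ∑ l ∈ S, ∑ r, ‖g l r (dil lam n ξ)‖ ^ 2 := by
        rw [sum_congr rfl fun l hl ↦ hpg l hl _, ← mul_sum, inv_mul_cancel_left₀ hlam]

end Mask

/-- under the building-block conditions 1 − |p_l|² = λⁿ Σ_r |g_l^{(r)}|²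
(for l ≤ N) and |p_l|² ≡ 1 (for l > N), the mask τ(ξ) = λ^{−n} Σ_l p_l(λξ) e^{iν_l·ξ}
satisfies 1 − Σ_{γ∈Γ} |τ(ξ+γ)|² = Σ_{l=1}^{N} Σ_{r=1}^{r_l} |g_l^{(r)}(λξ)|². -/
theorem subQMF_identity (lam n N : ℕ) (hlam : 2 ≤ lam) (hn : 1 ≤ n)
    (hN : N ≤ lam ^ n)
    (p : Fin (lam ^ n) → (Fin n → ℝ) → ℂ)
    (R : Fin (lam ^ n) → ℕ)
    (g : (l : Fin (lam ^ n)) → Fin (R l) → (Fin n → ℝ) → ℂ)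
    (hp : ∀ l, IsTrigPoly n (p l))
    (hg : ∀ l (r : Fin (R l)), IsTrigPoly n (g l r))
    (hpg : ∀ l : Fin (lam ^ n), (l : ℕ) < N →
      ∀ ξ, 1 - ‖p l ξ‖ ^ 2 = (lam : ℝ) ^ n * ∑ r, ‖g l r ξ‖ ^ 2)
    (hp1 : ∀ l : Fin (lam ^ n), N ≤ (l : ℕ) → ∀ ξ, ‖p l ξ‖ ^ 2 = 1)
    (ν : Fin (lam ^ n) → Fin n → ℤ)
    (hν_inj : Function.Injective ν) (hν_mem : ∀ l, ν l ∈ Lambda lam n)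
    (hν_surj : ∀ ρ ∈ Lambda lam n, ∃ l, ν l = ρ)
    (τ : (Fin n → ℝ) → ℂ)
    (hτ : ∀ ξ, τ ξ = ((lam : ℂ) ^ n)⁻¹ * ∑ l, p l (dil lam n ξ) * eI n (ν l) ξ)
    (ξ : Fin n → ℝ) :
    1 - ∑ ρ ∈ Lambda lam n, ‖τ (gshift lam n ξ ρ)‖ ^ 2
      = ∑ l ∈ Finset.univ.filter (fun l : Fin (lam ^ n) => (l : ℕ) < N),
          ∑ r, ‖g l r (dil lam n ξ)‖ ^ 2 := by
  obtain rfl : τ = polyphaseMask lam p ν := funext hτ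
  have : NeZero lam := ⟨by omega⟩
  have hν : Function.Injective fun l i ↦ (ν l i : ZMod lam) := fun l m hlm ↦
    hν_inj (injOn_intCast_zmod_Lambda lam n (hν_mem l) (hν_mem m) hlm)
  exact subQMF_identity_general (fun l ↦ (hp l).periodic) (fun l hl ↦ hpg l (by simpa using hl))
    (fun l hl ↦ hp1 l (by simpa using hl)) (Fintype.card_fin _) hν ξ
end
end

section
/- Let λ ≥ 2 and n ≥ 1 be integers, let p_1, …, p_{λ^n} be trigonometric polynomials with real coefficients satisfying p_l(0) = 1 for all l, let ν_1, …, ν_{λ^n} be an enumeration of Λ, define τ(ξ) = λ^{−n} Σ_{l=1}^{λ^n} p_l(λξ) e^{i ν_l·ξ}, and define q_{2,m}(ξ) = λ^{−n/2} (e^{i ν_m·ξ} − τ(ξ)·conj(p_m(λξ))) for 1 ≤ m ≤ λ^n. Let α ∈ ℕ₀ⁿ be a multi-index with |α| = 1, say α = e_j. Then D^α q_{2,m}(0) = 0 for all 1 ≤ m ≤ λ^n if and only if for every 1 ≤ m ≤ λ^n − 1, D^α p_m(0) − D^α p_{λ^n}(0) = (−i/λ)·((ν_m)_j − (ν_{λ^n})_j).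 -/
/-!
The scaling mask `τ` is the mean of the functions `u_l(ξ) = p_l(λξ) e^{iν_l·ξ}`. Since `p_l(0) = 1`,
the derivative of `u_l` at `0` is `b_l = λ D p_l(0) + i ν_l`, so that of `τ` is the mean of the
`b_l`. A trigonometric polynomial with real coefficients has a purely imaginary derivative at `0`,
so the conjugation in `q_{2,m}` turns the product-rule term `-λ conj(D p_m(0))` into
`+λ D p_m(0)`, and `D q_{2,m}(0)` is a nonzero multiple of the difference between `b_m` and the mean
of the `b_l`. These differences all vanish iff `b` is constant, and `b_m = b_{λⁿ}` is the stated
relation multiplied by `λ`.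
-/

open MeasureTheory Finset Filter Topology

noncomputable section

/-- `f` is a trigonometric polynomial with real coefficients. -/
def IsRealTrigPoly (n : ℕ) (f : (Fin n → ℝ) → ℂ) : Prop :=
  ∃ (F : Finset (Fin n → ℤ)) (h : (Fin n → ℤ) → ℝ),
    ∀ ξ : Fin n → ℝ,
      f ξ = ∑ k ∈ F, (h k : ℂ) * Complex.exp (-Complex.I * ∑ i, (k i : ℂ) * (ξ i : ℂ))

open Complex
open scoped BigOperators ComplexConjugate

theorem forall_eq_expect_iff {ι M : Type*} [Fintype ι] [AddCommMonoid M] [Module ℚ≥0 M]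
    {f : ι → M} (i₀ : ι) : (∀ i, f i = 𝔼 k, f k) ↔ ∀ i ≠ i₀, f i = f i₀ := by
  refine ⟨fun h i _ ↦ (h i).trans (h i₀).symm, fun h ↦ ?_⟩
  have hconst : f = fun _ ↦ f i₀ := funext fun i ↦ (eq_or_ne i i₀).elim (congrArg f) (h i)
  have : Nonempty ι := ⟨i₀⟩
  rw [hconst, Fintype.expect_const]
  exact fun _ ↦ rfl

section Calculus

variable {𝕜 E F : Type*} [NontriviallyNormedField 𝕜] [NormedAddCommGroup E] [NormedSpace 𝕜 E]
  [NormedAddCommGroup F] [NormedSpace 𝕜 F]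

theorem hasFDerivAt_expect {ι : Type*} [Fintype ι] [Module ℚ≥0 F] [SMulCommClass 𝕜 ℚ≥0 F]
    [ContinuousConstSMul ℚ≥0 F] {f : ι → E → F} {f' : ι → E →L[𝕜] F} {x : E}
    (hf : ∀ i, HasFDerivAt (f i) (f' i) x) :
    HasFDerivAt (fun y ↦ 𝔼 i, f i y) (𝔼 i, f' i) x :=
  (HasFDerivAt.fun_sum fun i _ ↦ hf i).const_smul _

theorem hasFDerivAt_comp_const_smul {f : E → F} {f' : E →L[𝕜] F} {c : 𝕜} {x : E}
    (hf : HasFDerivAt f f' (c • x)) : HasFDerivAt (fun y ↦ f (c • y)) (c • f') x :=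
  (hf.comp x ((hasFDerivAt_id x).const_smul c)).congr_fderiv (by ext; simp)

end Calculus

section Masks

variable {ι E : Type*} [NormedAddCommGroup E] [NormedSpace ℝ E]

theorem re_fderiv_zero_apply_eq_zero_of_conj_eq_comp_neg {f : E → ℂ}
    (hf : ∀ x, conj (f x) = f (-x)) (v : E) : (fderiv ℝ f 0 v).re = 0 := by
  have hfun : (fun x ↦ star (f x)) = fun x ↦ f ((-1 : ℝ) • x) := by
    funext x
    simpa using hf x
  have hderiv : conj (fderiv ℝ f 0 v) = -fderiv ℝ f 0 v := by
    have h := congrArg (fun g ↦ fderiv ℝ g 0 v) hfun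
    rw [fderiv_star, fderiv_comp_smul] at h
    simpa using h
  have hre := congrArg re hderiv
  rw [conj_re, neg_re] at hre
  linarith

/-- The plane wave `x ↦ e^{iω(x)}`, its frequency `ω` encoded as a linear functional. -/
def planeWave (ω : E →L[ℝ] ℝ) (x : E) : ℂ := exp (I * ω x)

theorem planeWave_apply_zero (ω : E →L[ℝ] ℝ) : planeWave ω 0 = 1 := by simp [planeWave]

theorem conj_planeWave (ω : E →L[ℝ] ℝ) (x : E) : conj (planeWave ω x) = planeWave ω (-x) := by
  simp [planeWave, ← exp_conj]

theorem hasFDerivAt_planeWave (ω : E →L[ℝ] ℝ) (x : E) :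
    HasFDerivAt (planeWave ω) (planeWave ω x • I • ofRealCLM.comp ω) x :=
  ((ofRealCLM.hasFDerivAt.comp x ω.hasFDerivAt).const_mul I).cexp

section Definitions

variable (lam : ℝ) (p : ι → E → ℂ) (ω : ι → E →L[ℝ] ℝ)

/-- The scaling mask `τ(ξ) = |ι|⁻¹ Σ_l p_l(λξ) e^{iω_l(ξ)}`, for an arbitrary finite family of
filters `p_l` and frequencies `ω_l`. -/
def scalingMask [Fintype ι] (x : E) : ℂ := 𝔼 l, p l (lam • x) * planeWave (ω l) x

/-- The wavelet mask `q_{2,m}(ξ) = |ι|^{-1/2} (e^{iω_m(ξ)} - τ(ξ) conj(p_m(λξ)))`. -/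
def waveletMask [Fintype ι] (m : ι) (x : E) : ℂ :=
  (√(Fintype.card ι : ℝ) : ℂ)⁻¹ *
    (planeWave (ω m) x - scalingMask lam p ω x * conj (p m (lam • x)))

/-- The derivative at the origin of the summand `p_l(λξ) e^{iω_l(ξ)}` of the scaling mask
when `p_l` is differentiable at `0` with `p_l(0) = 1`. -/
def summandDeriv (l : ι) : E →L[ℝ] ℂ := lam • fderiv ℝ (p l) 0 + I • ofRealCLM.comp (ω l)

end Definitions

variable {lam : ℝ} {p : ι → E → ℂ} {ω : ι → E →L[ℝ] ℝ}

theorem summandDeriv_apply (l : ι) (v : E) :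
    summandDeriv lam p ω l v = lam * fderiv ℝ (p l) 0 v + I * ω l v := by
  simp [summandDeriv]

theorem summandDeriv_apply_eq_iff (hlam : lam ≠ 0) (l m : ι) (v : E) :
    summandDeriv lam p ω l v = summandDeriv lam p ω m v ↔
      fderiv ℝ (p l) 0 v - fderiv ℝ (p m) 0 v = -I / lam * (ω l v - ω m v) := by
  have hlam' : (lam : ℂ) ≠ 0 := ofReal_ne_zero.mpr hlam
  rw [summandDeriv_apply, summandDeriv_apply, div_mul_eq_mul_div, eq_div_iff hlam']
  constructor <;> intro h <;> linear_combination h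

theorem hasFDerivAt_summand {l : ι} (hp : DifferentiableAt ℝ (p l) 0) (hp0 : p l 0 = 1) :
    HasFDerivAt (fun x ↦ p l (lam • x) * planeWave (ω l) x) (summandDeriv lam p ω l) 0 := by
  have hdil : HasFDerivAt (fun x ↦ p l (lam • x)) (lam • fderiv ℝ (p l) 0) 0 :=
    hasFDerivAt_comp_const_smul (by simpa using hp.hasFDerivAt)
  refine (hdil.mul (hasFDerivAt_planeWave (ω l) 0)).congr_fderiv ?_
  simp [summandDeriv, hp0, planeWave_apply_zero, add_comm]

variable [Fintype ι]

theorem scalingMask_apply_zero [Nonempty ι] (hp0 : ∀ l, p l 0 = 1) :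
    scalingMask lam p ω 0 = 1 := by
  simp [scalingMask, hp0, planeWave_apply_zero]

theorem hasFDerivAt_scalingMask (hp : ∀ l, DifferentiableAt ℝ (p l) 0) (hp0 : ∀ l, p l 0 = 1) :
    HasFDerivAt (scalingMask lam p ω) (𝔼 l, summandDeriv lam p ω l) 0 :=
  hasFDerivAt_expect fun l ↦ hasFDerivAt_summand (hp l) (hp0 l)

theorem hasFDerivAt_waveletMask (hp : ∀ l, DifferentiableAt ℝ (p l) 0) (hp0 : ∀ l, p l 0 = 1)
    (m : ι) :
    HasFDerivAt (waveletMask lam p ω m) ((√(Fintype.card ι : ℝ) : ℂ)⁻¹ •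
      (I • ofRealCLM.comp (ω m) -
        (lam • (starL' ℝ : ℂ ≃L[ℝ] ℂ).toContinuousLinearMap.comp (fderiv ℝ (p m) 0) +
          𝔼 l, summandDeriv lam p ω l))) 0 := by
  have : Nonempty ι := ⟨m⟩
  have hdil : HasFDerivAt (fun x ↦ p m (lam • x)) (lam • fderiv ℝ (p m) 0) 0 :=
    hasFDerivAt_comp_const_smul (by simpa using (hp m).hasFDerivAt)
  refine (((hasFDerivAt_planeWave (ω m) 0).sub
    ((hasFDerivAt_scalingMask hp hp0).mul hdil.star)).const_mul _).congr_fderiv ?_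
  simp [planeWave_apply_zero, scalingMask_apply_zero hp0, hp0]

theorem fderiv_waveletMask_apply (hp : ∀ l, DifferentiableAt ℝ (p l) 0) (hp0 : ∀ l, p l 0 = 1)
    {m : ι} {v : E} (hre : (fderiv ℝ (p m) 0 v).re = 0) :
    fderiv ℝ (waveletMask lam p ω m) 0 v = (√(Fintype.card ι : ℝ) : ℂ)⁻¹ *
      (summandDeriv lam p ω m v - 𝔼 l, summandDeriv lam p ω l v) := by
  have hconj : star (fderiv ℝ (p m) 0 v) = -fderiv ℝ (p m) 0 v :=
    Complex.ext (by simp [hre]) (by simp)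
  have hmean : (𝔼 l, summandDeriv lam p ω l) v = 𝔼 l, summandDeriv lam p ω l v := by
    simp [Finset.expect]
  calc fderiv ℝ (waveletMask lam p ω m) 0 v
      = (√(Fintype.card ι : ℝ) : ℂ)⁻¹ * (I * ω m v -
          (lam * star (fderiv ℝ (p m) 0 v) + 𝔼 l, summandDeriv lam p ω l v)) := by
        rw [(hasFDerivAt_waveletMask hp hp0 m).fderiv, ← hmean]
        simp
    _ = (√(Fintype.card ι : ℝ) : ℂ)⁻¹ *
          (summandDeriv lam p ω m v - 𝔼 l, summandDeriv lam p ω l v) := by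
        rw [hconj, summandDeriv_apply m]
        ring

theorem q2_first_vanishing_moment_iff_general (hlam : lam ≠ 0)
    (hp : ∀ l, DifferentiableAt ℝ (p l) 0) (hp0 : ∀ l, p l 0 = 1) {v : E}
    (hre : ∀ l, (fderiv ℝ (p l) 0 v).re = 0) (l₀ : ι) :
    (∀ m, fderiv ℝ (waveletMask lam p ω m) 0 v = 0) ↔
      ∀ m ≠ l₀, fderiv ℝ (p m) 0 v - fderiv ℝ (p l₀) 0 v = -I / lam * (ω m v - ω l₀ v) := by
  have : Nonempty ι := ⟨l₀⟩
  have hcard : (√(Fintype.card ι : ℝ) : ℂ)⁻¹ ≠ 0 := by simp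
  simp only [fderiv_waveletMask_apply hp hp0 (hre _), mul_eq_zero, hcard, false_or, sub_eq_zero,
    forall_eq_expect_iff l₀, summandDeriv_apply_eq_iff hlam]

end Masks

section IntegerFrequencies

/-- The frequency `ξ ↦ k·ξ` of an integer vector `k`. -/
def intFrequency {κ : Type*} [Fintype κ] (k : κ → ℤ) : (κ → ℝ) →L[ℝ] ℝ :=
  ∑ i, (k i : ℝ) • ContinuousLinearMap.proj i

theorem intFrequency_apply {κ : Type*} [Fintype κ] (k : κ → ℤ) (ξ : κ → ℝ) :
    intFrequency k ξ = ∑ i, (k i : ℝ) * ξ i := by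
  simp [intFrequency]

theorem intFrequency_single {κ : Type*} [Fintype κ] [DecidableEq κ] (k : κ → ℤ) (j : κ) :
    intFrequency k (Pi.single j 1) = k j := by
  simp [intFrequency_apply, Pi.single_apply]

variable {n : ℕ}

theorem eI_eq_planeWave (k : Fin n → ℤ) : eI n k = planeWave (intFrequency k) := by
  funext ξ
  simp [eI, planeWave, intFrequency_apply]

theorem dil_eq_smul (lam : ℕ) (ξ : Fin n → ℝ) : dil lam n ξ = (lam : ℝ) • ξ := rfl

theorem IsRealTrigPoly.exists_eq_sum_planeWave {f : (Fin n → ℝ) → ℂ} (hf : IsRealTrigPoly n f) :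
    ∃ (F : Finset (Fin n → ℤ)) (h : (Fin n → ℤ) → ℝ),
      f = fun ξ ↦ ∑ k ∈ F, (h k : ℂ) * planeWave (-intFrequency k) ξ := by
  obtain ⟨F, h, hf⟩ := hf
  exact ⟨F, h, funext fun ξ ↦ by simp [hf, planeWave, intFrequency_apply]⟩

theorem IsRealTrigPoly.differentiable {f : (Fin n → ℝ) → ℂ} (hf : IsRealTrigPoly n f) :
    Differentiable ℝ f := by
  obtain ⟨F, h, rfl⟩ := hf.exists_eq_sum_planeWave
  exact Differentiable.fun_sum fun k _ ↦
    Differentiable.const_mul (fun ξ ↦ (hasFDerivAt_planeWave _ ξ).differentiableAt) _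

theorem IsRealTrigPoly.conj_apply {f : (Fin n → ℝ) → ℂ} (hf : IsRealTrigPoly n f)
    (ξ : Fin n → ℝ) : conj (f ξ) = f (-ξ) := by
  obtain ⟨F, h, rfl⟩ := hf.exists_eq_sum_planeWave
  simp [conj_planeWave]

theorem scalingMask_intFrequency {lam : ℕ} (p : Fin (lam ^ n) → (Fin n → ℝ) → ℂ)
    (ν : Fin (lam ^ n) → Fin n → ℤ) (ξ : Fin n → ℝ) :
    scalingMask lam p (fun l ↦ intFrequency (ν l)) ξ =
      ((lam : ℂ) ^ n)⁻¹ * ∑ l, p l (dil lam n ξ) * eI n (ν l) ξ := by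
  simp [scalingMask, Fintype.expect_eq_sum_div_card, dil_eq_smul, eI_eq_planeWave, div_eq_inv_mul]

theorem waveletMask_intFrequency {lam : ℕ} (p : Fin (lam ^ n) → (Fin n → ℝ) → ℂ)
    (ν : Fin (lam ^ n) → Fin n → ℤ) (m : Fin (lam ^ n)) (ξ : Fin n → ℝ) :
    waveletMask lam p (fun l ↦ intFrequency (ν l)) m ξ =
      ((Real.sqrt ((lam : ℝ) ^ n))⁻¹ : ℂ) * (eI n (ν m) ξ -
        ((lam : ℂ) ^ n)⁻¹ * (∑ l, p l (dil lam n ξ) * eI n (ν l) ξ) *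
          conj (p m (dil lam n ξ))) := by
  simp [waveletMask, scalingMask_intFrequency, eI_eq_planeWave, dil_eq_smul]

end IntegerFrequencies

/-- first-order vanishing-moment criterion for the wavelet masks q_{2,m}.
For α = e_j, D^α q_{2,m}(0) = 0 for all m iff for every m < λⁿ (other than the last),
D^α p_m(0) − D^α p_{λⁿ}(0) = (−i/λ)((ν_m)_j − (ν_{λⁿ})_j). -/
theorem q2_first_vanishing_moment_iff (lam n : ℕ) (hlam : 2 ≤ lam) (hn : 1 ≤ n)
    (p : Fin (lam ^ n) → (Fin n → ℝ) → ℂ)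
    (hp : ∀ l, IsRealTrigPoly n (p l))
    (hp0 : ∀ l, p l 0 = 1)
    (ν : Fin (lam ^ n) → Fin n → ℤ)
    (hν_inj : Function.Injective ν) (hν_mem : ∀ l, ν l ∈ Lambda lam n)
    (hν_surj : ∀ ρ ∈ Lambda lam n, ∃ l, ν l = ρ)
    (τ : (Fin n → ℝ) → ℂ)
    (hτ : ∀ ξ, τ ξ = ((lam : ℂ) ^ n)⁻¹ * ∑ l, p l (dil lam n ξ) * eI n (ν l) ξ)
    (q2 : Fin (lam ^ n) → (Fin n → ℝ) → ℂ)
    (hq2 : ∀ m ξ, q2 m ξ = ((Real.sqrt ((lam : ℝ) ^ n))⁻¹ : ℂ) *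
      (eI n (ν m) ξ - τ ξ * (starRingEnd ℂ) (p m (dil lam n ξ))))
    (j : Fin n) :
    (∀ m, fderiv ℝ (q2 m) 0 (Pi.single j 1) = 0) ↔
      (∀ m : Fin (lam ^ n), (m : ℕ) < lam ^ n - 1 →
        fderiv ℝ (p m) 0 (Pi.single j 1)
          - fderiv ℝ (p ⟨lam ^ n - 1, Nat.sub_lt (pow_pos (by omega) n) one_pos⟩) 0
              (Pi.single j 1)
          = (-Complex.I / (lam : ℂ)) *
            ((ν m j : ℂ) -
              (ν ⟨lam ^ n - 1, Nat.sub_lt (pow_pos (by omega) n) one_pos⟩ j : ℂ))) := by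
  have hq (m) : q2 m = waveletMask lam p (fun l ↦ intFrequency (ν l)) m := by
    funext ξ
    rw [hq2, hτ, waveletMask_intFrequency]
  have hlast (h : lam ^ n - 1 < lam ^ n) (m : Fin (lam ^ n)) :
      m ≠ ⟨lam ^ n - 1, h⟩ ↔ (m : ℕ) < lam ^ n - 1 := by
    rw [Ne, Fin.ext_iff]
    lia
  have hre (l) : (fderiv ℝ (p l) 0 (Pi.single j 1)).re = 0 :=
    re_fderiv_zero_apply_eq_zero_of_conj_eq_comp_neg (hp l).conj_apply _
  simpa only [hq, hlast, intFrequency_single, ofReal_natCast, ofReal_intCast] using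
    q2_first_vanishing_moment_iff_general (ω := fun l ↦ intFrequency (ν l))
      (Nat.cast_ne_zero.mpr (by lia : lam ≠ 0)) (fun l ↦ (hp l).differentiable 0) hp0 hre
      ⟨lam ^ n - 1, Nat.sub_lt (pow_pos (by lia) n) one_pos⟩
end
end
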